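/- (Lovász (g,f)-factor theorem) Let G = (V, E) be a finite simple graph and let f, g : V → ℕ be functions such that g(x) ≤ f(x) and g(x) ≡ f(x) (mod 2) for all x ∈ V. Then G has a spanning subgraph F with g(x) ≤ deg_F(x) ≤ f(x) and deg_F(x) ≡ f(x) (mod 2) for all x ∈ V if and only if for all disjoint subsets S, T ⊆ V the quantity Σ_{x∈S} f(x) + Σ_{x∈T} (deg_G(x) − g(x)) − ε_G(S,T) − q(S,T) is nonnegative, where ε_G(S,T) is the number of edges of G with one endpoint in S and the other in T, and q(S,T) is the number of connected components C of G − (S ∪ T) such that Σ_{x∈V(C)} f(x) + ε_G(V(C), T) is odd. -/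

import Mathlib

/-- `ε_G(U, W)`: the number of edges of `G` with one endpoint in `U` and the
other endpoint in `W`. -/
noncomputable def edgesBetween {V : Type*} (G : SimpleGraph V) (U W : Set V) : ℕ :=
  Set.ncard {p : Sym2 V | p ∈ G.edgeSet ∧ ∃ u ∈ U, ∃ w ∈ W, p = s(u, w)}

/-- The set of vertices of `G` belonging to the connected component `c` of the
induced subgraph `G[R]`. -/
def componentVertexSet {V : Type*} (G : SimpleGraph V) (R : Set V)
    (c : (G.induce R).ConnectedComponent) : Set V :=
  {x : V | ∃ h : x ∈ R, (G.induce R).connectedComponentMk ⟨x, h⟩ = c}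

/-- `q(S, T)`: the number of connected components `C` of `G − (S ∪ T)` such
that `Σ_{x ∈ V(C)} f(x) + ε_G(V(C), T)` is odd. -/
noncomputable def lovaszQ {V : Type*} (G : SimpleGraph V) (f : V → ℕ)
    (S T : Finset V) : ℕ :=
  Set.ncard {c : (G.induce ((↑S ∪ ↑T : Set V)ᶜ)).ConnectedComponent |
    Odd ((∑ᶠ x ∈ componentVertexSet G ((↑S ∪ ↑T : Set V)ᶜ) c, f x) +
      edgesBetween G (componentVertexSet G ((↑S ∪ ↑T : Set V)ᶜ) c) ↑T)}

/-!
If `F` is a factor, each edge between `S` and `T`, and each component of `G - (S ∪ T)` counted by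
`q(S, T)`, can be charged to its own dart leaving `S` inside `F` or leaving `T` outside `F`; there
are at most `∑_S f + ∑_T (deg_G - g)` of these.

Conversely, factors are read off perfect matchings of Tutte's gadget, which has `f v` slots at each
vertex `v` and all darts of `G` as vertices. If there is none, an inclusion-minimal Tutte violator
of the gadget consists of the slots at some set `S` and the darts leaving some disjoint set `T`.
Its removal leaves three kinds of odd components: `∑_T g` isolated slots, `ε(S, T)` isolated
darts, and one component for each component counted by `q(S, T)`. So Tutte's inequality for this
violator says that Lovász's condition fails at `S`, `T`.
-/

open SimpleGraph

section Counting

variable {α β : Type*}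

lemma even_ncard_of_involution [Finite α] {s : Set α} (σ : α → α)
    (hmem : ∀ a ∈ s, σ a ∈ s) (hinv : ∀ a ∈ s, σ (σ a) = a) (hne : ∀ a ∈ s, σ a ≠ a) :
    Even s.ncard := by
  have hs : s.Finite := s.toFinite
  have hsum := Finset.sum_involution (s := hs.toFinset) (f := fun _ => (1 : ZMod 2))
    (fun a _ => σ a) (fun _ _ => by decide) (fun a ha _ => hne a (hs.mem_toFinset.1 ha))
    (fun a ha => hs.mem_toFinset.2 (hmem a (hs.mem_toFinset.1 ha)))
    (fun a ha => hinv a (hs.mem_toFinset.1 ha))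
  rw [Finset.sum_const, nsmul_one, ← Set.ncard_eq_toFinset_card s hs] at hsum
  exact ZMod.natCast_eq_zero_iff_even.1 hsum

lemma ncard_le_ncard_of_forall_subsingleton [Finite β] {s : Set α} {t : Set β} (r : α → β → Prop)
    (hs : ∀ a ∈ s, ∃ b ∈ t, r a b) (ht : ∀ b ∈ t, {a ∈ s | r a b}.Subsingleton) :
    s.ncard ≤ t.ncard := by
  rcases s.eq_empty_or_nonempty with rfl | ⟨a, ha⟩
  · simp
  have : Nonempty β := ⟨(hs a ha).choose⟩
  choose! φ hφt hφr using hs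
  exact Set.ncard_le_ncard_of_injOn φ hφt fun a ha b hb hab =>
    ht (φ a) (hφt a ha) ⟨ha, hφr a ha⟩ ⟨hb, hab ▸ hφr b hb⟩

lemma ncard_eq_ncard_preimage_inl_add_ncard_preimage_inr [Finite α] [Finite β] (s : Set (α ⊕ β)) :
    s.ncard = (Sum.inl ⁻¹' s).ncard + (Sum.inr ⁻¹' s).ncard := by
  rw [← Set.ncard_image_of_injective (Sum.inl ⁻¹' s) Sum.inl_injective,
    ← Set.ncard_image_of_injective (Sum.inr ⁻¹' s) Sum.inr_injective, ← Set.ncard_union_eq,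
    Set.image_preimage_inl_union_image_preimage_inr]
  exact (Set.isCompl_range_inl_range_inr.disjoint.mono (Set.image_subset_range _ _)
    (Set.image_subset_range _ _))

lemma ncard_eq_sum_ncard_fiberwise [Finite α] (φ : α → β) (p : α → Prop) (A : Finset β) :
    {a | φ a ∈ A ∧ p a}.ncard = ∑ b ∈ A, {a | φ a = b ∧ p a}.ncard := by
  classical
  have := Fintype.ofFinite α
  rw [Set.ncard_eq_toFinset_card',
    Finset.card_eq_sum_card_fiberwise (f := φ) (t := A) (by intro a; simp +contextual)]
  refine Finset.sum_congr rfl fun b hb => ?_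
  rw [Set.ncard_eq_toFinset_card']
  congr 1
  ext a
  simp only [Set.mem_toFinset, Set.mem_ofPred_eq, Finset.mem_filter]
  grind

lemma ncard_sigma_eq_sum_ncard [Finite α] {β : α → Type*} [∀ a, Finite (β a)] (A : Finset α)
    (p : (Σ a, β a) → Prop) :
    {s : Σ a, β a | s.1 ∈ A ∧ p s}.ncard = ∑ a ∈ A, {b : β a | p ⟨a, b⟩}.ncard := by
  rw [ncard_eq_sum_ncard_fiberwise]
  refine Finset.sum_congr rfl fun a _ => ?_
  rw [← Set.ncard_image_of_injective _ (sigma_mk_injective (i := a))]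
  congr 1
  ext ⟨a', b⟩
  simp only [Set.mem_ofPred_eq, Set.mem_image, Sigma.mk.injEq]
  constructor
  · rintro ⟨rfl, hb⟩
    exact ⟨b, hb, rfl, HEq.rfl⟩
  · rintro ⟨b, hb, rfl, ⟨⟩⟩
    exact ⟨rfl, hb⟩

lemma ncard_fin_val_lt (n k : ℕ) : {i : Fin n | (i : ℕ) < k}.ncard = min n k := by
  rw [Set.ncard_eq_toFinset_card', Set.toFinset_ofPred, Fin.card_filter_val_lt]

lemma ncard_fin_le_val (n k : ℕ) : {i : Fin n | k ≤ i}.ncard = n - k := by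
  have hsplit := Set.ncard_add_ncard_compl {i : Fin n | (i : ℕ) < k}
  rw [Set.compl_ofPred, ncard_fin_val_lt, Nat.card_fin] at hsplit
  simp only [not_lt] at hsplit
  omega

end Counting

section Darts

variable {V : Type*} {G : SimpleGraph V}

instance [Finite V] : Finite G.Dart :=
  Finite.of_injective _ Dart.toProd_injective

lemma even_ncard_darts [Finite V] {D : Set G.Dart} (hD : ∀ d ∈ D, d.symm ∈ D) : Even D.ncard :=
  even_ncard_of_involution Dart.symm hD (fun d _ => d.symm_symm) (fun d _ => d.symm_ne)

lemma edgesBetween_eq_ncard_darts {U W : Set V} (hUW : Disjoint U W) :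
    edgesBetween G U W = {d : G.Dart | d.fst ∈ U ∧ d.snd ∈ W}.ncard := by
  have hinj : Set.InjOn Dart.edge {d : G.Dart | d.fst ∈ U ∧ d.snd ∈ W} := by
    intro d hd e he hde
    rcases (dart_edge_eq_iff d e).1 hde with h | rfl
    · exact h
    · exact (hUW.notMem_of_mem_left hd.1 he.2).elim
  rw [← hinj.ncard_image, edgesBetween]
  congr 1
  ext p
  constructor
  · rintro ⟨hp, u, hu, w, hw, rfl⟩
    exact ⟨⟨(u, w), hp⟩, ⟨hu, hw⟩, rfl⟩
  · rintro ⟨d, ⟨hU, hW⟩, rfl⟩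
    exact ⟨d.edge_mem, d.fst, hU, d.snd, hW, rfl⟩

lemma ncard_neighborSet_eq_ncard_darts {F : SimpleGraph V} (hF : F ≤ G) (x : V) :
    (F.neighborSet x).ncard = {d : G.Dart | d.fst = x ∧ F.Adj d.fst d.snd}.ncard := by
  refine (Set.ncard_congr (fun d _ => d.snd) ?_ ?_ ?_).symm
  · rintro d ⟨rfl, hd⟩
    exact hd
  · rintro d e ⟨rfl, -⟩ ⟨he, -⟩ hde
    exact Dart.ext _ _ (Prod.ext he.symm hde)
  · exact fun y hy => ⟨⟨(x, y), hF hy⟩, ⟨rfl, hy⟩, rfl⟩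

lemma sum_ncard_neighborSet_eq_ncard_darts [Finite V] {F : SimpleGraph V} (hF : F ≤ G)
    (A : Finset V) :
    ∑ x ∈ A, (F.neighborSet x).ncard = {d : G.Dart | d.fst ∈ A ∧ F.Adj d.fst d.snd}.ncard := by
  simp only [ncard_neighborSet_eq_ncard_darts hF, ncard_eq_sum_ncard_fiberwise]

end Darts

section ComponentVertexSet

variable {V : Type*} {G : SimpleGraph V} {R : Set V} {c c' : (G.induce R).ConnectedComponent}
  {N : Set V} {x y : V}

lemma componentVertexSet_eq_image_supp (c : (G.induce R).ConnectedComponent) :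
    componentVertexSet G R c = Subtype.val '' c.supp := by
  ext x
  simp [componentVertexSet]

lemma ncard_componentVertexSet (c : (G.induce R).ConnectedComponent) :
    (componentVertexSet G R c).ncard = c.supp.ncard := by
  rw [componentVertexSet_eq_image_supp, Set.ncard_image_of_injective _ Subtype.val_injective]

lemma componentVertexSet_subset (c : (G.induce R).ConnectedComponent) :
    componentVertexSet G R c ⊆ R :=
  fun _ hx => hx.1

lemma componentVertexSet_nonempty (c : (G.induce R).ConnectedComponent) :
    (componentVertexSet G R c).Nonempty := by
  rw [componentVertexSet_eq_image_supp]
  exact c.nonempty_supp.image _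

lemma eq_of_mem_componentVertexSet (hx : x ∈ componentVertexSet G R c)
    (hx' : x ∈ componentVertexSet G R c') : c = c' :=
  hx.2.symm.trans hx'.2

lemma mem_componentVertexSet_of_adj (hx : x ∈ componentVertexSet G R c) (hy : y ∈ R)
    (hxy : G.Adj x y) : y ∈ componentVertexSet G R c := by
  obtain ⟨hxR, rfl⟩ := hx
  have hadj : (G.induce R).Adj ⟨y, hy⟩ ⟨x, hxR⟩ := hxy.symm
  exact ⟨hy, ConnectedComponent.sound hadj.reachable⟩

lemma mem_or_mem_or_mem_of_adj_componentVertexSet {S T : Set V}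
    {c : (G.induce (S ∪ T)ᶜ).ConnectedComponent} (hx : x ∈ componentVertexSet G (S ∪ T)ᶜ c)
    (hxy : G.Adj x y) : y ∈ componentVertexSet G (S ∪ T)ᶜ c ∨ y ∈ S ∨ y ∈ T := by
  by_cases hy : y ∈ S ∪ T
  · exact .inr hy
  · exact .inl (mem_componentVertexSet_of_adj hx hy hxy)

lemma disjoint_componentVertexSet {S T : Set V} (c : (G.induce (S ∪ T)ᶜ).ConnectedComponent) :
    Disjoint (componentVertexSet G (S ∪ T)ᶜ c) S ∧ Disjoint (componentVertexSet G (S ∪ T)ᶜ c) T :=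
  Set.disjoint_union_right.1 (Set.disjoint_compl_left_iff_subset.2 subset_rfl |>.mono_left
    (componentVertexSet_subset c))

lemma componentVertexSet_subset_of_adj_closed (hN : ∀ x ∈ N, ∀ y ∈ R, G.Adj x y → y ∈ N)
    (hxN : x ∈ N) (hxc : x ∈ componentVertexSet G R c) : componentVertexSet G R c ⊆ N := by
  have hreach {u v : R} (huv : (G.induce R).Reachable u v) (hu : ↑u ∈ N) : ↑v ∈ N := by
    obtain ⟨w⟩ := huv
    induction w with
    | nil => exact hu
    | @cons u v _ huv _ ih => exact ih (hN u hu v v.2 huv)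
  rintro y ⟨hyR, hy⟩
  exact hreach (ConnectedComponent.exact (hxc.2.trans hy.symm)) hxN

lemma componentVertexSet_eq_of_preconnected (hNR : N ⊆ R) (hconn : (G.induce N).Preconnected)
    (hN : ∀ x ∈ N, ∀ y ∈ R, G.Adj x y → y ∈ N) (hxN : x ∈ N)
    (hxc : x ∈ componentVertexSet G R c) : componentVertexSet G R c = N := by
  refine (componentVertexSet_subset_of_adj_closed hN hxN hxc).antisymm fun y hy => ?_
  have hreach := (hconn ⟨y, hy⟩ ⟨x, hxN⟩).map (G.induceHomOfLE hNR).toHom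
  exact ⟨hNR hy, (ConnectedComponent.sound hreach).trans hxc.2⟩

lemma preconnected_induce_componentVertexSet (c : (G.induce R).ConnectedComponent) :
    (G.induce (componentVertexSet G R c)).Preconnected := by
  rintro ⟨x, hx⟩ ⟨y, hy⟩
  let φ : c.toSimpleGraph →g G.induce (componentVertexSet G R c) :=
    ⟨fun z => ⟨z.1, z.1.2, z.2⟩, fun h => h⟩
  exact (c.reachable_toSimpleGraph (u := ⟨x, hx.1⟩) (v := ⟨y, hy.1⟩) hx.2 hy.2).map φ

end ComponentVertexSet

section Necessity

variable {V : Type*} {G F : SimpleGraph V} {f g : V → ℕ}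

/-- `F` is a spanning subgraph of `G` with `g ≤ deg_F ≤ f` and `deg_F ≡ f (mod 2)`. -/
def IsParityFactor (G : SimpleGraph V) (f g : V → ℕ) (F : SimpleGraph V) : Prop :=
  F ≤ G ∧ ∀ x, g x ≤ (F.neighborSet x).ncard ∧ (F.neighborSet x).ncard ≤ f x ∧
    (F.neighborSet x).ncard ≡ f x [MOD 2]

/-- The quantity `δ(S, T)` whose nonnegativity for all disjoint `S`, `T` is Lovász's condition. -/
noncomputable def lovaszDelta (G : SimpleGraph V) (f g : V → ℕ) (S T : Finset V) : ℤ :=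
  (∑ x ∈ S, (f x : ℤ)) + (∑ x ∈ T, (((G.neighborSet x).ncard : ℤ) - (g x : ℤ)))
    - (edgesBetween G ↑S ↑T : ℤ) - (lovaszQ G f S T : ℤ)

lemma lovaszDelta_nonneg_iff (S T : Finset V) :
    0 ≤ lovaszDelta G f g S T ↔
      ∑ x ∈ T, g x + edgesBetween G ↑S ↑T + lovaszQ G f S T ≤
        ∑ x ∈ S, f x + ∑ x ∈ T, (G.neighborSet x).ncard := by
  rw [lovaszDelta, Finset.sum_sub_distrib]
  push_cast [← Nat.cast_sum]
  omega

/-- The darts that leave `S` along edges of `F` or leave `T` along edges outside `F`. Each edge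
between `S` and `T`, and each component counted by `lovaszQ`, is charged to its own such dart. -/
def chargedDarts (G F : SimpleGraph V) (S T : Set V) : Set G.Dart :=
  {d | d.fst ∈ S ∧ F.Adj d.fst d.snd ∨ d.fst ∈ T ∧ ¬F.Adj d.fst d.snd}

lemma ncard_chargedDarts_add_sum_le [Finite V] (hF : F ≤ G) (S T : Finset V) :
    (chargedDarts G F S T).ncard + ∑ x ∈ T, (F.neighborSet x).ncard ≤
      ∑ x ∈ S, (F.neighborSet x).ncard + ∑ x ∈ T, (G.neighborSet x).ncard := by
  have hT : {d : G.Dart | d.fst ∈ T ∧ ¬F.Adj d.fst d.snd}.ncard +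
      ∑ x ∈ T, (F.neighborSet x).ncard = ∑ x ∈ T, (G.neighborSet x).ncard := by
    rw [sum_ncard_neighborSet_eq_ncard_darts hF, sum_ncard_neighborSet_eq_ncard_darts le_rfl,
      ← Set.ncard_union_eq (Set.disjoint_left.2 fun d hd hd' => hd.2 hd'.2)]
    congr 1
    ext d
    simp only [Set.mem_union, Set.mem_ofPred_eq, d.adj, and_true]
    tauto
  rw [← hT, sum_ncard_neighborSet_eq_ncard_darts hF S, ← add_assoc]
  exact Nat.add_le_add_right (Set.ncard_union_le _ _) _

lemma edgesBetween_le_ncard_chargedDarts [Finite V] (F : SimpleGraph V) {S T : Set V}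
    (hST : Disjoint S T) :
    edgesBetween G S T ≤ {d ∈ chargedDarts G F S T | d.snd ∉ (S ∪ T)ᶜ}.ncard := by
  rw [edgesBetween_eq_ncard_darts hST]
  refine ncard_le_ncard_of_forall_subsingleton (fun d e => e = d ∨ e = d.symm) ?_ ?_
  · rintro d ⟨hS, hT⟩
    by_cases hd : F.Adj d.fst d.snd
    · exact ⟨d, ⟨.inl ⟨hS, hd⟩, by simp [hT]⟩, .inl rfl⟩
    · exact ⟨d.symm, ⟨.inr ⟨hT, fun h => hd h.symm⟩, by simp [hS]⟩, .inr rfl⟩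
  · rintro e - d ⟨⟨hS, hT⟩, hd⟩ d' ⟨⟨hS', hT'⟩, hd'⟩
    rcases hd with rfl | rfl <;> rcases hd' with hd' | hd'
    · exact hd'
    · exact (hST.notMem_of_mem_left hS (hd' ▸ hT')).elim
    · exact (hST.notMem_of_mem_left hS' (hd' ▸ hT)).elim
    · exact Dart.symm_involutive.injective hd'

lemma even_sum_ncard_neighborSet_add_edgesBetween [Finite V] (hF : F ≤ G) {S T : Set V}
    {U : Finset V} (hUT : Disjoint ↑U T) (hU : ∀ x ∈ U, ∀ y, G.Adj x y → y ∈ U ∨ y ∈ S ∨ y ∈ T)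
    (hcharged : ∀ d ∈ chargedDarts G F S T, d.snd ∉ U) :
    Even (∑ x ∈ U, (F.neighborSet x).ncard + edgesBetween G ↑U T) := by
  have hsplit : {d : G.Dart | d.fst ∈ U ∧ F.Adj d.fst d.snd} =
      {d : G.Dart | d.fst ∈ U ∧ d.snd ∈ U ∧ F.Adj d.fst d.snd} ∪
        {d : G.Dart | d.fst ∈ U ∧ d.snd ∈ T} := by
    ext d
    constructor
    · rintro ⟨hdU, hdF⟩
      rcases hU _ hdU _ d.adj with h | h | h
      · exact .inl ⟨hdU, h, hdF⟩
      · exact (hcharged d.symm (.inl ⟨h, hdF.symm⟩) hdU).elim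
      · exact .inr ⟨hdU, h⟩
    · rintro (⟨hdU, -, hdF⟩ | ⟨hdU, hdT⟩)
      · exact ⟨hdU, hdF⟩
      · exact ⟨hdU, by_contra fun h => hcharged d.symm (.inr ⟨hdT, fun h' => h h'.symm⟩) hdU⟩
  have hinside : Even {d : G.Dart | d.fst ∈ U ∧ d.snd ∈ U ∧ F.Adj d.fst d.snd}.ncard :=
    even_ncard_darts fun d ⟨hfst, hsnd, hdF⟩ => ⟨hsnd, hfst, hdF.symm⟩
  rw [edgesBetween_eq_ncard_darts hUT, sum_ncard_neighborSet_eq_ncard_darts hF, hsplit,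
    Set.ncard_union_eq (Set.disjoint_left.2 fun d hd hd' =>
      hUT.notMem_of_mem_left hd.2.1 hd'.2), add_assoc]
  exact hinside.add (Even.add_self _)

lemma exists_chargedDart_of_odd [Finite V] (hF : F ≤ G)
    (hpar : ∀ x, (F.neighborSet x).ncard ≡ f x [MOD 2]) {S T : Set V}
    {c : (G.induce (S ∪ T)ᶜ).ConnectedComponent}
    (hc : Odd ((∑ᶠ x ∈ componentVertexSet G (S ∪ T)ᶜ c, f x) +
      edgesBetween G (componentVertexSet G (S ∪ T)ᶜ c) T)) :
    ∃ d ∈ chargedDarts G F S T, d.snd ∈ componentVertexSet G (S ∪ T)ᶜ c := by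
  by_contra! hcharged
  obtain ⟨U, hU⟩ := (componentVertexSet G (S ∪ T)ᶜ c).toFinite.exists_finset_coe
  have hadj (x) (hx : x ∈ U) (y) (hxy : G.Adj x y) : y ∈ U ∨ y ∈ S ∨ y ∈ T := by
    rw [← Finset.mem_coe, hU] at hx ⊢
    exact mem_or_mem_or_mem_of_adj_componentVertexSet hx hxy
  rw [← hU, finsum_mem_coe_finset] at hc
  have heven := even_sum_ncard_neighborSet_add_edgesBetween hF
    (hU ▸ (disjoint_componentVertexSet c).2) hadj fun d hd hdU =>
      hcharged d hd (hU ▸ hdU)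
  have hsum := Nat.ModEq.sum (s := U) fun x _ => hpar x
  rw [Nat.even_iff, hsum.add_right _, ← Nat.even_iff] at heven
  exact Nat.not_even_iff_odd.2 hc heven

lemma lovaszQ_le_ncard_chargedDarts [Finite V] (hF : F ≤ G)
    (hpar : ∀ x, (F.neighborSet x).ncard ≡ f x [MOD 2]) (S T : Finset V) :
    lovaszQ G f S T ≤ {d ∈ chargedDarts G F S T | d.snd ∈ (↑S ∪ ↑T : Set V)ᶜ}.ncard := by
  refine ncard_le_ncard_of_forall_subsingleton
    (fun c d => d.snd ∈ componentVertexSet G (↑S ∪ ↑T : Set V)ᶜ c) (fun c hc => ?_) ?_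
  · obtain ⟨d, hd, hdc⟩ := exists_chargedDart_of_odd hF hpar hc
    exact ⟨d, ⟨hd, componentVertexSet_subset c hdc⟩, hdc⟩
  · rintro d - c ⟨-, hc⟩ c' ⟨-, hc'⟩
    exact eq_of_mem_componentVertexSet hc hc'

lemma IsParityFactor.lovaszDelta_nonneg [Finite V] (h : IsParityFactor G f g F) {S T : Finset V}
    (hST : Disjoint S T) : 0 ≤ lovaszDelta G f g S T := by
  obtain ⟨hF, hdeg⟩ := h
  have hS : ∑ x ∈ S, (F.neighborSet x).ncard ≤ ∑ x ∈ S, f x :=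
    Finset.sum_le_sum fun x _ => (hdeg x).2.1
  have hT : ∑ x ∈ T, g x ≤ ∑ x ∈ T, (F.neighborSet x).ncard :=
    Finset.sum_le_sum fun x _ => (hdeg x).1
  have hε := edgesBetween_le_ncard_chargedDarts (G := G) F (Finset.disjoint_coe.2 hST)
  have hq := lovaszQ_le_ncard_chargedDarts hF (fun x => (hdeg x).2.2) S T
  have hcharged := ncard_chargedDarts_add_sum_le hF S T
  have hsplit : {d ∈ chargedDarts G F S T | d.snd ∈ (↑S ∪ ↑T : Set V)ᶜ}.ncard +
      {d ∈ chargedDarts G F S T | d.snd ∉ (↑S ∪ ↑T : Set V)ᶜ}.ncard =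
        (chargedDarts G F S T).ncard :=
    Set.ncard_inter_add_ncard_sdiff_eq_ncard _ {d : G.Dart | d.snd ∈ (↑S ∪ ↑T : Set V)ᶜ}
  rw [lovaszDelta_nonneg_iff]
  linarith

end Necessity

section Tutte

variable {W : Type*} {H : SimpleGraph W} {u : Set W}

lemma isTutteViolator_iff :
    H.IsTutteViolator u ↔ u.ncard < (H.induce uᶜ).oddComponents.ncard := by
  rw [IsTutteViolator, Set.compl_eq_univ_sdiff, induce_eq_coe_induce_top]
  rfl

variable [Finite W]

lemma odd_ncard_oddComponents_induce_compl (hW : Even (Nat.card W)) (u : Set W) :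
    Odd (H.induce uᶜ).oddComponents.ncard ↔ Odd u.ncard := by
  rw [odd_ncard_oddComponents, Nat.card_coe_set_eq, ← Nat.not_even_iff_odd, ← Nat.not_even_iff_odd,
    Set.even_ncard_compl_iff hW]

lemma ncard_oddComponents_le_of_adj {x : W} (hx : x ∈ u) (a b : W)
    (hab : ∀ c : (H.induce uᶜ).ConnectedComponent, ∀ y ∈ componentVertexSet H uᶜ c, H.Adj x y →
      a ∈ componentVertexSet H uᶜ c ∨ b ∈ componentVertexSet H uᶜ c) :
    (H.induce uᶜ).oddComponents.ncard ≤ (H.induce (u \ {x})ᶜ).oddComponents.ncard + 2 := by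
  let containing (a : W) : Set (H.induce uᶜ).ConnectedComponent :=
    {c | a ∈ componentVertexSet H uᶜ c}
  have hcontaining (a : W) : (containing a).ncard ≤ 1 :=
    Set.ncard_le_one_iff_subsingleton.2 fun c hc c' hc' => eq_of_mem_componentVertexSet hc hc'
  have hsub : uᶜ ⊆ (u \ {x})ᶜ := Set.compl_subset_compl.2 Set.sdiff_subset
  let φ : (H.induce uᶜ).ConnectedComponent → (H.induce (u \ {x})ᶜ).ConnectedComponent :=
    ConnectedComponent.map (H.induceHomOfLE hsub).toHom
  have hφ (c) (hc : c ∉ containing a ∪ containing b) :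
      componentVertexSet H (u \ {x})ᶜ (φ c) = componentVertexSet H uᶜ c := by
    obtain ⟨z, hz⟩ := componentVertexSet_nonempty c
    refine componentVertexSet_eq_of_preconnected ((componentVertexSet_subset c).trans hsub)
      (preconnected_induce_componentVertexSet c) (fun y hy z hz hyz => ?_) hz
      ⟨hsub hz.1, by rw [← hz.2]; rfl⟩
    refine mem_componentVertexSet_of_adj hy (fun hzu => ?_) hyz
    obtain rfl : z = x := by_contra fun hzx => hz ⟨hzu, hzx⟩
    exact hc (hab c y hy hyz.symm)
  have hkept : ((H.induce uᶜ).oddComponents \ (containing a ∪ containing b)).ncard ≤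
      (H.induce (u \ {x})ᶜ).oddComponents.ncard := by
    refine Set.ncard_le_ncard_of_injOn φ ?_ ?_
    · rintro c ⟨hodd, hc⟩
      rw [oddComponents, Set.mem_ofPred_eq, ← ncard_componentVertexSet] at hodd ⊢
      rwa [hφ c hc]
    · rintro c ⟨-, hc⟩ c' ⟨-, hc'⟩ h
      obtain ⟨z, hz⟩ := componentVertexSet_nonempty c
      exact eq_of_mem_componentVertexSet hz (by rwa [← hφ c' hc', ← h, hφ c hc])
  have hremoved := Set.ncard_union_le (containing a) (containing b)
  have hsplit := Set.ncard_le_ncard_sdiff_add_ncard (H.induce uᶜ).oddComponents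
    (containing a ∪ containing b)
  linarith [hcontaining a, hcontaining b]

/-- Every vertex of `u` has neighbours in at least three components of `H - u`, expressed as: in a
component avoiding any two given vertices. -/
def IsTripleSeparating (H : SimpleGraph W) (u : Set W) : Prop :=
  ∀ x ∈ u, ∀ a b, ∃ c : (H.induce uᶜ).ConnectedComponent, ∃ y ∈ componentVertexSet H uᶜ c,
    H.Adj x y ∧ a ∉ componentVertexSet H uᶜ c ∧ b ∉ componentVertexSet H uᶜ c

lemma exists_isTutteViolator_isTripleSeparating
    (hH : ∀ M : H.Subgraph, ¬M.IsPerfectMatching) :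
    ∃ u : Set W, H.IsTutteViolator u ∧ IsTripleSeparating H u := by
  rcases Nat.even_or_odd (Nat.card W) with hW | hW
  swap
  · exact ⟨∅, .empty hW, fun x hx => hx.elim⟩
  have hviolator : ∃ u, H.IsTutteViolator u := by
    by_contra! h
    obtain ⟨M, hM⟩ := tutte.2 h
    exact hH M hM
  obtain ⟨u, hu, hmin⟩ := {u | H.IsTutteViolator u}.toFinite.exists_minimal hviolator
  refine ⟨u, hu, fun x hx a b => ?_⟩
  by_contra! hab
  have hsmaller : ¬H.IsTutteViolator (u \ {x}) := fun h => (hmin h Set.sdiff_subset hx).2 rfl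
  have hcount := ncard_oddComponents_le_of_adj hx a b fun c y hy hxy => by
    by_contra! h
    exact h.2 (hab c y hy hxy h.1)
  have hparity := odd_ncard_oddComponents_induce_compl (H := H) hW u
  have hcard := Set.ncard_sdiff_singleton_add_one hx
  rw [Set.mem_ofPred_eq, isTutteViolator_iff] at hu
  rw [isTutteViolator_iff] at hsmaller
  simp only [Nat.odd_iff] at hparity
  omega

end Tutte

section Gadget

variable {V : Type*} {G : SimpleGraph V} {f g : V → ℕ}

/-- The vertices of the gadget: `f v` slots at every vertex `v` of `G`, and the darts of `G`. -/
abbrev GadgetVertex (G : SimpleGraph V) (f : V → ℕ) : Type _ :=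
  (Σ v : V, Fin (f v)) ⊕ G.Dart

/-- Tutte's gadget. A perfect matching of it encodes the parity factor whose edges are those with
both darts matched to slots; the darts of any other edge are matched to each other, and the slots
left over at `v`, which avoid the first `g v` ones, are matched among themselves. -/
def parityGadget (G : SimpleGraph V) (f g : V → ℕ) : SimpleGraph (GadgetVertex G f) where
  Adj
    | .inl s, .inl t => s.1 = t.1 ∧ (s.2 : ℕ) ≠ t.2 ∧ g s.1 ≤ s.2 ∧ g t.1 ≤ t.2
    | .inl s, .inr d => d.fst = s.1
    | .inr d, .inl s => d.fst = s.1
    | .inr d, .inr e => e = d.symm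
  symm := ⟨by
    rintro (s | d) (t | e) h
    · exact ⟨h.1.symm, h.2.1.symm, h.2.2.2, h.2.2.1⟩
    · exact h
    · exact h
    · exact Dart.symm_involutive.eq_iff.1 h.symm⟩
  loopless := ⟨by
    rintro (s | d) h
    · exact h.2.1 rfl
    · exact d.symm_ne h.symm⟩

lemma parityGadget_adj_inl_inl {s t : Σ v, Fin (f v)} :
    (parityGadget G f g).Adj (.inl s) (.inl t) ↔
      s.1 = t.1 ∧ (s.2 : ℕ) ≠ t.2 ∧ g s.1 ≤ s.2 ∧ g t.1 ≤ t.2 :=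
  Iff.rfl

lemma parityGadget_adj_inl_inr {s : Σ v, Fin (f v)} {d : G.Dart} :
    (parityGadget G f g).Adj (.inl s) (.inr d) ↔ d.fst = s.1 :=
  Iff.rfl

lemma parityGadget_adj_inr_inl {d : G.Dart} {s : Σ v, Fin (f v)} :
    (parityGadget G f g).Adj (.inr d) (.inl s) ↔ d.fst = s.1 :=
  Iff.rfl

lemma parityGadget_adj_inr_inr {d e : G.Dart} :
    (parityGadget G f g).Adj (.inr d) (.inr e) ↔ e = d.symm :=
  Iff.rfl

section Matching

variable {p : GadgetVertex G f → GadgetVertex G f}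

/-- The subgraph of `G` encoded by a perfect matching of the gadget, given as the map `p` sending
each vertex to its partner. -/
def slotMatchedGraph (p : GadgetVertex G f → GadgetVertex G f) : SimpleGraph V where
  Adj x y := ∃ h : G.Adj x y, (p (.inr ⟨(x, y), h⟩)).isLeft ∧ (p (.inr ⟨(y, x), h.symm⟩)).isLeft
  symm := ⟨fun _ _ ⟨h, hxy, hyx⟩ => ⟨h.symm, hyx, hxy⟩⟩
  loopless := ⟨fun _ ⟨h, _⟩ => h.ne rfl⟩

lemma slotMatchedGraph_le : slotMatchedGraph p ≤ G :=
  fun _ _ h => h.1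

lemma slotMatchedGraph_adj_iff (hadj : ∀ w, (parityGadget G f g).Adj w (p w))
    (hp : Function.Involutive p) (d : G.Dart) :
    (slotMatchedGraph p).Adj d.fst d.snd ↔ (p (.inr d)).isLeft := by
  refine ⟨fun h => h.2.1, fun hd => ⟨d.adj, hd, ?_⟩⟩
  change (p (.inr d.symm)).isLeft
  rcases hsymm : p (.inr d.symm) with s | e
  · rfl
  · have he : e = d := by
      simpa [hsymm, parityGadget_adj_inr_inr] using hadj (.inr d.symm)
    rw [he, hp.eq_iff] at hsymm
    rw [← hsymm] at hd
    exact absurd hd (by simp)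

lemma ncard_neighborSet_slotMatchedGraph (hadj : ∀ w, (parityGadget G f g).Adj w (p w))
    (hp : Function.Involutive p) (x : V) :
    ((slotMatchedGraph p).neighborSet x).ncard =
      {i : Fin (f x) | (p (.inl ⟨x, i⟩)).isRight}.ncard := by
  rw [ncard_neighborSet_eq_ncard_darts slotMatchedGraph_le,
    ← Set.ncard_image_of_injective _ (hp.injective.comp Sum.inr_injective),
    ← Set.ncard_image_of_injective {i : Fin (f x) | _}
      (Sum.inl_injective.comp (sigma_mk_injective (β := fun v => Fin (f v)) (i := x)))]
  congr 1
  ext w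
  simp only [slotMatchedGraph_adj_iff hadj hp, Set.mem_image, Set.mem_ofPred_eq,
    Function.comp_apply]
  constructor
  · rintro ⟨d, ⟨rfl, hd⟩, rfl⟩
    obtain ⟨⟨v, i⟩, hs⟩ := Sum.isLeft_iff.1 hd
    obtain rfl : d.fst = v := parityGadget_adj_inr_inl.1 (hs ▸ hadj (.inr d))
    exact ⟨i, by rw [← hs, hp]; rfl, hs.symm⟩
  · rintro ⟨i, hi, rfl⟩
    obtain ⟨d, hd⟩ := Sum.isRight_iff.1 hi
    have hdx : d.fst = x := parityGadget_adj_inl_inr.1 (hd ▸ hadj (.inl ⟨x, i⟩))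
    rw [hp.eq_iff] at hd
    exact ⟨d, ⟨hdx, by rw [← hd]; rfl⟩, hd.symm⟩

lemma exists_slot_of_isLeft (hadj : ∀ w, (parityGadget G f g).Adj w (p w)) {x : V}
    {i : Fin (f x)} (hi : (p (.inl ⟨x, i⟩)).isLeft) :
    g x ≤ i ∧ ∃ j : Fin (f x), p (.inl ⟨x, i⟩) = .inl ⟨x, j⟩ := by
  obtain ⟨⟨v, j⟩, hs⟩ := Sum.isLeft_iff.1 hi
  obtain ⟨rfl, -, hle, -⟩ := parityGadget_adj_inl_inl.1 (hs ▸ hadj (.inl ⟨x, i⟩))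
  exact ⟨hle, j, hs⟩

lemma even_ncard_isLeft (hadj : ∀ w, (parityGadget G f g).Adj w (p w))
    (hp : Function.Involutive p) (x : V) :
    Even {i : Fin (f x) | (p (.inl ⟨x, i⟩)).isLeft}.ncard := by
  choose! σ hσ using fun i (hi : i ∈ {i : Fin (f x) | (p (.inl ⟨x, i⟩)).isLeft}) =>
    (exists_slot_of_isLeft hadj hi).2
  have hσσ (i) (hi : i ∈ {i : Fin (f x) | (p (.inl ⟨x, i⟩)).isLeft}) :
      p (.inl ⟨x, σ i⟩) = .inl ⟨x, i⟩ :=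
    (hp.eq_iff.1 (hσ i hi)).symm
  have hmem (i) (hi : i ∈ {i : Fin (f x) | (p (.inl ⟨x, i⟩)).isLeft}) :
      (p (.inl ⟨x, σ i⟩)).isLeft := by
    rw [hσσ i hi]
    rfl
  refine even_ncard_of_involution σ hmem (fun i hi => ?_) fun i hi h => ?_
  · simpa using (hσ (σ i) (hmem i hi)).symm.trans (hσσ i hi)
  · exact (hadj (.inl ⟨x, i⟩)).ne (by rw [hσ i hi, h])

lemma isParityFactor_slotMatchedGraph (hgf : ∀ x, g x ≤ f x) (hpar : ∀ x, g x ≡ f x [MOD 2])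
    (hadj : ∀ w, (parityGadget G f g).Adj w (p w)) (hp : Function.Involutive p) :
    IsParityFactor G f g (slotMatchedGraph p) := by
  refine ⟨slotMatchedGraph_le, fun x => ?_⟩
  rw [ncard_neighborSet_slotMatchedGraph hadj hp]
  have hsplit := Set.ncard_add_ncard_compl {i : Fin (f x) | (p (.inl ⟨x, i⟩)).isRight}
  have hcompl : {i : Fin (f x) | (p (.inl ⟨x, i⟩)).isRight}ᶜ =
      {i : Fin (f x) | (p (.inl ⟨x, i⟩)).isLeft} := by
    ext i
    simp
  rw [hcompl, Nat.card_fin] at hsplit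
  have hle : {i : Fin (f x) | (p (.inl ⟨x, i⟩)).isLeft}.ncard ≤ f x - g x :=
    (Set.ncard_le_ncard fun i hi => (exists_slot_of_isLeft hadj hi).1).trans_eq
      (ncard_fin_le_val _ _)
  have heven := Nat.even_iff.1 (even_ncard_isLeft hadj hp x)
  have hgfx := hgf x
  have hparx := hpar x
  unfold Nat.ModEq at *
  omega

lemma exists_isParityFactor_of_isPerfectMatching (hgf : ∀ x, g x ≤ f x)
    (hpar : ∀ x, g x ≡ f x [MOD 2]) {M : (parityGadget G f g).Subgraph} (hM : M.IsPerfectMatching) :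
    ∃ F, IsParityFactor G f g F := by
  choose p hadj huniq using Subgraph.isPerfectMatching_iff.1 hM
  exact ⟨slotMatchedGraph p, isParityFactor_slotMatchedGraph hgf hpar
    (fun w => (hadj w).adj_sub) fun w => (huniq (p w) w (hadj w).symm).symm⟩

end Matching

section Barrier

variable {S T U : Set V}

/-- The slots at `S` and the darts leaving `T`: the vertex set of the gadget at which Tutte's
inequality corresponds to Lovász's condition for the pair `S`, `T`. -/
def gadgetBarrier (G : SimpleGraph V) (f : V → ℕ) (S T : Set V) : Set (GadgetVertex G f) :=
  {w | w.elim (fun s => s.1 ∈ S) (fun d => d.fst ∈ T)}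

lemma ncard_slots [Finite V] (f : V → ℕ) (A : Finset V) :
    {s : Σ v, Fin (f v) | s.1 ∈ A}.ncard = ∑ x ∈ A, f x := by
  simpa using ncard_sigma_eq_sum_ncard (β := fun v => Fin (f v)) A fun _ => True

lemma ncard_gadgetBarrier [Finite V] (S T : Finset V) :
    (gadgetBarrier G f ↑S ↑T).ncard = ∑ x ∈ S, f x + ∑ x ∈ T, (G.neighborSet x).ncard := by
  rw [ncard_eq_ncard_preimage_inl_add_ncard_preimage_inr,
    sum_ncard_neighborSet_eq_ncard_darts le_rfl, ← ncard_slots]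
  simp [gadgetBarrier, Dart.adj]

section TripleSeparating

variable {u : Set (GadgetVertex G f)}

lemma IsTripleSeparating.dart_mem (hu : IsTripleSeparating (parityGadget G f g) u) {d e : G.Dart}
    (hd : .inr d ∈ u) (he : e.fst = d.fst) : .inr e ∈ u := by
  by_contra heu
  obtain ⟨c, s | d', hy, hdy, hsymm, hec⟩ := hu _ hd (.inr d.symm) (.inr e)
  · exact hec (mem_componentVertexSet_of_adj hy heu (he.trans hdy))
  · obtain rfl : d' = d.symm := hdy
    exact hsymm hy

lemma IsTripleSeparating.exists_dart (hu : IsTripleSeparating (parityGadget G f g) u)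
    {s : Σ v, Fin (f v)} (hs : .inl s ∈ u) (a : GadgetVertex G f) :
    ∃ c, ∃ d : G.Dart, .inr d ∈ componentVertexSet (parityGadget G f g) uᶜ c ∧
      d.fst = s.1 ∧ a ∉ componentVertexSet (parityGadget G f g) uᶜ c := by
  obtain ⟨c, t | d, ht, hst, hac, -⟩ := hu _ hs a a
  · obtain ⟨c', t' | d, ht', hst', hac', htc'⟩ := hu _ hs a (.inl t)
    · refine (htc' (mem_componentVertexSet_of_adj ht' ht.1 ?_)).elim
      rw [parityGadget_adj_inl_inl] at hst hst' ⊢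
      refine ⟨hst'.1.symm.trans hst.1, fun h => htc' ?_, hst'.2.2.2, hst.2.2.2⟩
      rwa [← Sigma.ext (hst'.1.symm.trans hst.1) ((Fin.heq_ext_iff (by grind)).2 h)]
    · exact ⟨c', d, ht', hst', hac'⟩
  · exact ⟨c, d, ht, hst, hac⟩

lemma IsTripleSeparating.slot_mem (hu : IsTripleSeparating (parityGadget G f g) u)
    {s t : Σ v, Fin (f v)} (hs : .inl s ∈ u) (ht : t.1 = s.1) : .inl t ∈ u := by
  by_contra htu
  obtain ⟨c, d, hd, hds, htc⟩ := hu.exists_dart hs (.inl t)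
  exact htc (mem_componentVertexSet_of_adj hd htu (hds.trans ht.symm))

lemma IsTripleSeparating.exists_eq_gadgetBarrier (hu : IsTripleSeparating (parityGadget G f g) u) :
    ∃ S T : Set V, Disjoint S T ∧ u = gadgetBarrier G f S T ∧
      ∀ v ∉ S ∪ T, 0 < f v ∧ ∃ y, G.Adj v y := by
  let T : Set V := {v | ∀ d : G.Dart, d.fst = v → .inr d ∈ u}
  let S : Set V := {v | v ∉ T ∧ ∀ s : Σ v, Fin (f v), s.1 = v → .inl s ∈ u}
  refine ⟨S, T, Set.disjoint_left.2 fun v hv => hv.1, ?_, fun v hv => ?_⟩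
  · ext (s | d)
    · refine ⟨fun hs => ⟨fun hT => ?_, fun t ht => hu.slot_mem hs ht⟩, fun hs => hs.2 s rfl⟩
      obtain ⟨c, d, hd, hds, -⟩ := hu.exists_dart hs (.inl s)
      exact hd.1 (hT d hds)
    · exact ⟨fun hd e he => hu.dart_mem hd he, fun hd => hd d rfl⟩
  · rw [Set.mem_union, not_or] at hv
    obtain ⟨hvS, hvT⟩ := hv
    obtain ⟨s, rfl, -⟩ : ∃ s : Σ v, Fin (f v), s.1 = v ∧ .inl s ∉ u := by
      by_contra! h
      exact hvS ⟨hvT, h⟩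
    obtain ⟨d, hd, -⟩ : ∃ d : G.Dart, d.fst = s.1 ∧ .inr d ∉ u := by
      by_contra! h
      exact hvT h
    exact ⟨s.2.pos, d.snd, hd ▸ d.adj⟩

end TripleSeparating

/-- The part of the gadget that a component `U` of `G - (S ∪ T)` turns into when the barrier of
`S` and `T` is removed. -/
def gadgetPiece (G : SimpleGraph V) (f : V → ℕ) (S U : Set V) : Set (GadgetVertex G f) :=
  {w | w.elim (fun s => s.1 ∈ U) (fun d => d.fst ∈ U ∨ d.fst ∈ S ∧ d.snd ∈ U)}

lemma odd_ncard_gadgetPiece_iff [Finite V] (hST : Disjoint S T) {U : Finset V}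
    (hUT : Disjoint ↑U T) (hU : ∀ x ∈ U, ∀ y, G.Adj x y → y ∈ U ∨ y ∈ S ∨ y ∈ T) :
    Odd (gadgetPiece G f S ↑U).ncard ↔ Odd (∑ x ∈ U, f x + edgesBetween G ↑U T) := by
  let D : Set G.Dart :=
    {d | d.fst ∈ U ∧ (d.snd ∈ U ∨ d.snd ∈ S) ∨ d.fst ∈ S ∧ d.snd ∈ U}
  have hD : Even D.ncard := even_ncard_darts <| by
    rintro d (⟨hfst, hsnd | hsnd⟩ | ⟨hfst, hsnd⟩)
    · exact .inl ⟨hsnd, .inl hfst⟩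
    · exact .inr ⟨hsnd, hfst⟩
    · exact .inl ⟨hsnd, .inr hfst⟩
  have hdarts : Sum.inr ⁻¹' gadgetPiece G f S ↑U = {d : G.Dart | d.fst ∈ U ∧ d.snd ∈ T} ∪ D := by
    ext d
    have hdU := fun h => hU d.fst h d.snd d.adj
    simp only [gadgetPiece, D, Set.mem_preimage, Set.mem_ofPred_eq, Sum.elim_inr, Set.mem_union,
      Finset.mem_coe]
    tauto
  have hdisj : Disjoint {d : G.Dart | d.fst ∈ U ∧ d.snd ∈ T} D := by
    refine Set.disjoint_left.2 ?_
    rintro d ⟨-, hdT⟩ (⟨-, hdU | hdS⟩ | ⟨-, hdU⟩)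
    · exact hUT.notMem_of_mem_left hdU hdT
    · exact hST.notMem_of_mem_left hdS hdT
    · exact hUT.notMem_of_mem_left hdU hdT
  have hslots : (Sum.inl ⁻¹' gadgetPiece G f S ↑U).ncard = ∑ x ∈ U, f x := ncard_slots f U
  rw [ncard_eq_ncard_preimage_inl_add_ncard_preimage_inr, hslots, hdarts,
    Set.ncard_union_eq hdisj, edgesBetween_eq_ncard_darts hUT, ← add_assoc, Nat.odd_add]
  simp only [hD, iff_true, Finset.mem_coe]

lemma odd_ncard_gadgetPiece_componentVertexSet_iff [Finite V] (hST : Disjoint S T)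
    (c : (G.induce (S ∪ T)ᶜ).ConnectedComponent) :
    Odd (gadgetPiece G f S (componentVertexSet G (S ∪ T)ᶜ c)).ncard ↔
      Odd ((∑ᶠ x ∈ componentVertexSet G (S ∪ T)ᶜ c, f x) +
        edgesBetween G (componentVertexSet G (S ∪ T)ᶜ c) T) := by
  obtain ⟨U, hU⟩ := (componentVertexSet G (S ∪ T)ᶜ c).toFinite.exists_finset_coe
  have hadj (x) (hx : x ∈ U) (y) (hxy : G.Adj x y) : y ∈ U ∨ y ∈ S ∨ y ∈ T := by
    rw [← Finset.mem_coe, hU] at hx ⊢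
    exact mem_or_mem_or_mem_of_adj_componentVertexSet hx hxy
  rw [← hU, finsum_mem_coe_finset]
  exact odd_ncard_gadgetPiece_iff hST (hU ▸ (disjoint_componentVertexSet c).2) hadj

lemma gadgetPiece_subset_compl_gadgetBarrier (hST : Disjoint S T) (hUS : Disjoint U S)
    (hUT : Disjoint U T) : gadgetPiece G f S U ⊆ (gadgetBarrier G f S T)ᶜ := by
  rintro (s | d) hw
  · exact hUS.notMem_of_mem_left hw
  · rcases hw with h | h
    · exact hUT.notMem_of_mem_left h
    · exact hST.notMem_of_mem_left h.1

lemma mem_gadgetPiece_of_adj (hU : ∀ x ∈ U, ∀ y, G.Adj x y → y ∈ U ∨ y ∈ S ∨ y ∈ T) :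
    ∀ w ∈ gadgetPiece G f S U, ∀ w' ∈ (gadgetBarrier G f S T)ᶜ,
      (parityGadget G f g).Adj w w' → w' ∈ gadgetPiece G f S U := by
  rintro (s | d) hw (t | e) hw' hadj
  · obtain ⟨hst, -⟩ := parityGadget_adj_inl_inl.1 hadj
    exact (hst ▸ hw : t.1 ∈ U)
  · exact .inl (parityGadget_adj_inl_inr.1 hadj ▸ hw)
  · rw [parityGadget_adj_inr_inl] at hadj
    rcases hw with h | h
    · exact (hadj ▸ h : t.1 ∈ U)
    · exact (hw' (hadj ▸ h.1 : t.1 ∈ S)).elim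
  · obtain rfl := parityGadget_adj_inr_inr.1 hadj
    rcases hw with h | h
    · rcases hU _ h _ d.adj with h' | h' | h'
      · exact .inl h'
      · exact .inr ⟨h', h⟩
      · exact (hw' h').elim
    · exact .inl h.2

lemma preconnected_induce_gadgetPiece (hconn : (G.induce U).Preconnected)
    (hf : ∀ v ∈ U, 0 < f v) (hdeg : ∀ v ∈ U, ∃ y, G.Adj v y) :
    ((parityGadget G f g).induce (gadgetPiece G f S U)).Preconnected := by
  set K := (parityGadget G f g).induce (gadgetPiece G f S U)
  let root (x : U) : gadgetPiece G f S U := ⟨.inl ⟨x, 0, hf x x.2⟩, x.2⟩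
  have hdart (x : U) (d : G.Dart) (hd : d.fst = x) :
      K.Reachable ⟨.inr d, .inl (hd ▸ x.2)⟩ (root x) :=
    
    have hadj : K.Adj ⟨.inr d, .inl (hd ▸ x.2)⟩ (root x) := hd
    hadj.reachable
  have hroot_of_adj (x y : U) (hxy : G.Adj x y) : K.Reachable (root x) (root y) :=
    have hsymm : K.Adj ⟨.inr ⟨(x, y), hxy⟩, .inl x.2⟩ ⟨.inr ⟨(y, x), hxy.symm⟩, .inl y.2⟩ := rfl
    (hdart x _ rfl).symm.trans (hsymm.reachable.trans (hdart y _ rfl))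
  have hroot (x y : U) : K.Reachable (root x) (root y) := by
    obtain ⟨p⟩ := hconn x y
    induction p with
    | nil => rfl
    | cons h _ ih => exact (hroot_of_adj _ _ h).trans ih
  suffices h : ∀ w, ∃ x, K.Reachable w (root x) by
    intro w w'
    obtain ⟨x, hx⟩ := h w
    obtain ⟨y, hy⟩ := h w'
    exact hx.trans ((hroot x y).trans hy.symm)
  rintro ⟨s | d, hw⟩
  · obtain ⟨y, hy⟩ := hdeg s.1 hw
    have hsd : K.Adj ⟨.inl s, hw⟩ ⟨.inr ⟨(s.1, y), hy⟩, .inl hw⟩ := rfl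
    exact ⟨⟨s.1, hw⟩, hsd.reachable.trans (hdart _ _ rfl)⟩
  · by_cases hd : d.fst ∈ U
    · exact ⟨⟨d.fst, hd⟩, hdart _ _ rfl⟩
    · have hd' : d.snd ∈ U := (hw.resolve_left hd).2
      have hsymm : K.Adj ⟨.inr d, hw⟩ ⟨.inr d.symm, .inl hd'⟩ := rfl
      exact ⟨⟨d.snd, hd'⟩, hsymm.reachable.trans (hdart _ _ rfl)⟩

lemma componentVertexSet_parityGadget_eq_gadgetPiece (hST : Disjoint S T)
    (hf : ∀ v ∉ S ∪ T, 0 < f v ∧ ∃ y, G.Adj v y) (c : (G.induce (S ∪ T)ᶜ).ConnectedComponent)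
    {c' : ((parityGadget G f g).induce (gadgetBarrier G f S T)ᶜ).ConnectedComponent}
    {w : GadgetVertex G f} (hw : w ∈ gadgetPiece G f S (componentVertexSet G (S ∪ T)ᶜ c))
    (hwc' : w ∈ componentVertexSet (parityGadget G f g) (gadgetBarrier G f S T)ᶜ c') :
    componentVertexSet (parityGadget G f g) (gadgetBarrier G f S T)ᶜ c' =
      gadgetPiece G f S (componentVertexSet G (S ∪ T)ᶜ c) := by
  obtain ⟨hcS, hcT⟩ := disjoint_componentVertexSet c
  exact componentVertexSet_eq_of_preconnected (gadgetPiece_subset_compl_gadgetBarrier hST hcS hcT)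
    (preconnected_induce_gadgetPiece (preconnected_induce_componentVertexSet c)
      (fun v hv => (hf v hv.1).1) fun v hv => (hf v hv.1).2)
    (mem_gadgetPiece_of_adj fun _ hx _ => mem_or_mem_or_mem_of_adj_componentVertexSet hx)
    hw hwc'

/-- The gadget vertices isolated by the removal of the barrier of `S` and `T`. -/
def gadgetIsolated (G : SimpleGraph V) (f g : V → ℕ) (S T : Set V) : Set (GadgetVertex G f) :=
  {w | w.elim (fun s => s.1 ∈ T ∧ s.2 < g s.1) (fun d => d.fst ∈ S ∧ d.snd ∈ T)}

lemma ncard_gadgetIsolated_le [Finite V] {S T : Finset V} (hST : Disjoint S T) :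
    (gadgetIsolated G f g ↑S ↑T).ncard ≤ ∑ x ∈ T, g x + edgesBetween G ↑S ↑T := by
  rw [ncard_eq_ncard_preimage_inl_add_ncard_preimage_inr,
    edgesBetween_eq_ncard_darts (Finset.disjoint_coe.2 hST)]
  refine Nat.add_le_add_right ?_ _
  refine (ncard_sigma_eq_sum_ncard T fun s : Σ v, Fin (f v) => (s.2 : ℕ) < g s.1).trans_le ?_
  exact Finset.sum_le_sum fun x _ => (ncard_fin_val_lt (f x) (g x)).trans_le (min_le_right _ _)

section OddComponent

variable {c : ((parityGadget G f g).induce (gadgetBarrier G f S T)ᶜ).ConnectedComponent}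

lemma even_ncard_componentVertexSet_of_slot (hpar : ∀ x, g x ≡ f x [MOD 2]) (hST : Disjoint S T)
    {s : Σ v, Fin (f v)} (hsT : s.1 ∈ T) (hgs : g s.1 ≤ s.2)
    (hsc : .inl s ∈ componentVertexSet (parityGadget G f g) (gadgetBarrier G f S T)ᶜ c) :
    Even (componentVertexSet (parityGadget G f g) (gadgetBarrier G f S T)ᶜ c).ncard := by
  obtain ⟨v, i⟩ := s
  let slot (i : Fin (f v)) : GadgetVertex G f := .inl ⟨v, i⟩
  have hslot : slot.Injective := Sum.inl_injective.comp sigma_mk_injective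
  have hc : componentVertexSet (parityGadget G f g) (gadgetBarrier G f S T)ᶜ c =
      slot '' {i | g v ≤ i} := by
    refine componentVertexSet_eq_of_preconnected ?_ ?_ ?_ ⟨i, hgs, rfl⟩ hsc
    · rintro _ ⟨j, -, rfl⟩
      exact hST.symm.notMem_of_mem_left hsT
    · rintro ⟨_, j, hj, rfl⟩ ⟨_, k, hk, rfl⟩
      by_cases hjk : j = k
      · subst hjk
        rfl
      · exact Adj.reachable ⟨rfl, Fin.val_ne_of_ne hjk, hj, hk⟩
    · rintro _ ⟨j, -, rfl⟩ (⟨v', k⟩ | d) hw hadj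
      · obtain ⟨rfl, -, -, hk⟩ := parityGadget_adj_inl_inl.1 hadj
        exact ⟨k, hk, rfl⟩
      · exact (hw (parityGadget_adj_inl_inr.1 hadj ▸ hsT : d.fst ∈ T)).elim
  rw [hc, Set.ncard_image_of_injective _ hslot, ncard_fin_le_val]
  exact (Nat.even_sub' (hgs.trans i.2.le)).2
    (by simpa only [Nat.odd_iff] using by rw [hpar v])

lemma even_ncard_componentVertexSet_of_dart (hST : Disjoint S T) {d : G.Dart} (hfst : d.fst ∈ S)
    (hsnd : d.snd ∈ S)
    (hdc : .inr d ∈ componentVertexSet (parityGadget G f g) (gadgetBarrier G f S T)ᶜ c) :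
    Even (componentVertexSet (parityGadget G f g) (gadgetBarrier G f S T)ᶜ c).ncard := by
  have hc : componentVertexSet (parityGadget G f g) (gadgetBarrier G f S T)ᶜ c =
      {.inr d, .inr d.symm} := by
    refine componentVertexSet_eq_of_preconnected ?_ ?_ ?_ (.inl rfl) hdc
    · rintro _ (rfl | rfl)
      · exact hST.notMem_of_mem_left hfst
      · exact hST.notMem_of_mem_left hsnd
    · exact (induce_pair_connected_of_adj (parityGadget_adj_inr_inr.2 rfl)).preconnected
    · rintro _ (rfl | rfl) (t | e) hw hadj
      · exact (hw (parityGadget_adj_inr_inl.1 hadj ▸ hfst : t.1 ∈ S)).elim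
      · exact .inr (congrArg _ hadj)
      · exact (hw (parityGadget_adj_inr_inl.1 hadj ▸ hsnd : t.1 ∈ S)).elim
      · exact .inl (congrArg _ (hadj.trans d.symm_symm))
  rw [hc, Set.ncard_pair (Sum.inr_injective.ne d.symm_ne.symm)]
  exact even_two

lemma exists_mem_gadgetIsolated_or_exists_gadgetPiece (hpar : ∀ x, g x ≡ f x [MOD 2])
    (hST : Disjoint S T)
    (hc : Odd (componentVertexSet (parityGadget G f g) (gadgetBarrier G f S T)ᶜ c).ncard) :
    ∃ w ∈ componentVertexSet (parityGadget G f g) (gadgetBarrier G f S T)ᶜ c,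
      w ∈ gadgetIsolated G f g S T ∨
        ∃ c' : (G.induce (S ∪ T)ᶜ).ConnectedComponent,
          w ∈ gadgetPiece G f S (componentVertexSet G (S ∪ T)ᶜ c') := by
  have hcompl (x : V) (hS : x ∉ S) (hT : x ∉ T) :
      ∃ c' : (G.induce (S ∪ T)ᶜ).ConnectedComponent, x ∈ componentVertexSet G (S ∪ T)ᶜ c' :=
    ⟨_, fun h => h.elim hS hT, rfl⟩
  obtain ⟨w, hw⟩ := componentVertexSet_nonempty c
  refine ⟨w, hw, ?_⟩
  rcases w with s | d
  · by_cases hT : s.1 ∈ T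
    · refine .inl ⟨hT, ?_⟩
      by_contra! hgs
      exact Nat.not_even_iff_odd.2 hc (even_ncard_componentVertexSet_of_slot hpar hST hT hgs hw)
    · obtain ⟨c', hc'⟩ := hcompl s.1 hw.1 hT
      exact .inr ⟨c', hc'⟩
  · by_cases hfst : d.fst ∈ S
    · by_cases hT : d.snd ∈ T
      · exact .inl ⟨hfst, hT⟩
      · have hS : d.snd ∉ S := fun hsnd =>
          Nat.not_even_iff_odd.2 hc (even_ncard_componentVertexSet_of_dart hST hfst hsnd hw)
        obtain ⟨c', hc'⟩ := hcompl d.snd hS hT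
        exact .inr ⟨c', .inr ⟨hfst, hc'⟩⟩
    · obtain ⟨c', hc'⟩ := hcompl d.fst hfst hw.1
      exact .inr ⟨c', .inl hc'⟩

end OddComponent

lemma ncard_oddComponents_parityGadget_le [Finite V] (hpar : ∀ x, g x ≡ f x [MOD 2])
    {S T : Finset V} (hST : Disjoint S T)
    (hf : ∀ v ∉ (↑S ∪ ↑T : Set V), 0 < f v ∧ ∃ y, G.Adj v y) :
    ((parityGadget G f g).induce (gadgetBarrier G f ↑S ↑T)ᶜ).oddComponents.ncard ≤
      (gadgetIsolated G f g ↑S ↑T).ncard + lovaszQ G f S T := by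
  set H := parityGadget G f g
  set R := (gadgetBarrier G f ↑S ↑T)ᶜ
  let piece (c' : (G.induce (↑S ∪ ↑T : Set V)ᶜ).ConnectedComponent) :=
    gadgetPiece G f ↑S (componentVertexSet G (↑S ∪ ↑T : Set V)ᶜ c')
  have hST' : Disjoint (S : Set V) ↑T := Finset.disjoint_coe.2 hST
  let I : Set (H.induce R).ConnectedComponent :=
    {c | ∃ w ∈ gadgetIsolated G f g ↑S ↑T, w ∈ componentVertexSet H R c}
  let P : Set (H.induce R).ConnectedComponent :=
    {c | Odd (componentVertexSet H R c).ncard ∧ ∃ c', componentVertexSet H R c = piece c'}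
  have hcover : (H.induce R).oddComponents ⊆ I ∪ P := fun c hc => by
    rw [oddComponents, Set.mem_ofPred_eq, ← ncard_componentVertexSet] at hc
    obtain ⟨w, hwc, hw | ⟨c', hw⟩⟩ := exists_mem_gadgetIsolated_or_exists_gadgetPiece hpar hST' hc
    · exact .inl ⟨w, hw, hwc⟩
    · exact .inr ⟨hc, c', componentVertexSet_parityGadget_eq_gadgetPiece hST' hf c' hw hwc⟩
  have hI : I.ncard ≤ (gadgetIsolated G f g ↑S ↑T).ncard :=
    ncard_le_ncard_of_forall_subsingleton (fun c w => w ∈ componentVertexSet H R c)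
      (fun _ hc => hc) fun _ _ _ hc _ hc' => eq_of_mem_componentVertexSet hc.2 hc'.2
  have hP : P.ncard ≤ lovaszQ G f S T := by
    refine ncard_le_ncard_of_forall_subsingleton (fun c c' => componentVertexSet H R c = piece c')
      ?_ ?_
    · rintro c ⟨hodd, c', hc'⟩
      rw [hc'] at hodd
      exact ⟨c', (odd_ncard_gadgetPiece_componentVertexSet_iff hST' c').1 hodd, hc'⟩
    · rintro c' - c₁ ⟨-, h₁⟩ c₂ ⟨-, h₂⟩
      obtain ⟨w, hw⟩ := componentVertexSet_nonempty c₁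
      exact eq_of_mem_componentVertexSet hw (h₂ ▸ h₁ ▸ hw)
  exact (Set.ncard_le_ncard hcover).trans ((Set.ncard_union_le _ _).trans (add_le_add hI hP))

end Barrier

lemma exists_isParityFactor_of_forall_lovaszDelta_nonneg [Finite V] (hgf : ∀ x, g x ≤ f x)
    (hpar : ∀ x, g x ≡ f x [MOD 2])
    (h : ∀ S T : Finset V, Disjoint S T → 0 ≤ lovaszDelta G f g S T) :
    ∃ F, IsParityFactor G f g F := by
  by_contra hF
  obtain ⟨u, hu, hsep⟩ := exists_isTutteViolator_isTripleSeparating fun M hM =>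
    hF (exists_isParityFactor_of_isPerfectMatching (G := G) hgf hpar hM)
  obtain ⟨S, T, hST, rfl, hf⟩ := hsep.exists_eq_gadgetBarrier
  lift S to Finset V using S.toFinite
  lift T to Finset V using T.toFinite
  rw [Finset.disjoint_coe] at hST
  rw [isTutteViolator_iff, ncard_gadgetBarrier] at hu
  have hodd := ncard_oddComponents_parityGadget_le hpar hST hf
  have hisolated := ncard_gadgetIsolated_le (G := G) (f := f) (g := g) hST
  have hcond := (lovaszDelta_nonneg_iff S T).1 (h S T hST)
  linarith

end Gadget

/-- Lovász (g,f)-factor theorem: a finite simple graph `G` has a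
spanning subgraph `F` with `g(x) ≤ deg_F(x) ≤ f(x)` and
`deg_F(x) ≡ f(x) (mod 2)` for all `x` if and only if for all disjoint
`S, T ⊆ V`, `Σ_{x∈S} f(x) + Σ_{x∈T} (deg_G(x) − g(x)) − ε_G(S,T) − q(S,T) ≥ 0`. -/
theorem lovasz_gf_factor {V : Type*} [Fintype V] [DecidableEq V]
    (G : SimpleGraph V) (f g : V → ℕ)
    (hgf : ∀ x, g x ≤ f x) (hpar : ∀ x, g x ≡ f x [MOD 2]) :
    (∃ F : SimpleGraph V, F ≤ G ∧
      ∀ x : V, g x ≤ (F.neighborSet x).ncard ∧ (F.neighborSet x).ncard ≤ f x ∧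
        (F.neighborSet x).ncard ≡ f x [MOD 2]) ↔
    (∀ S T : Finset V, Disjoint S T →
      (0 : ℤ) ≤ (∑ x ∈ S, (f x : ℤ))
        + (∑ x ∈ T, (((G.neighborSet x).ncard : ℤ) - (g x : ℤ)))
        - (edgesBetween G ↑S ↑T : ℤ) - (lovaszQ G f S T : ℤ)) :=
  ⟨fun ⟨_, hF⟩ _ _ hST => IsParityFactor.lovaszDelta_nonneg hF hST,
    exists_isParityFactor_of_forall_lovaszDelta_nonneg hgf hpar⟩
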